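/- Let p,q,r be distinct positive integers, n = p+q+r, and let (y_k) be the sequence with y₀ = ⋯ = y_{n−1} = 1 satisfying y_{k+n} y_k = α y_{k+p} y_{k+n−p} + β y_{k+q} y_{k+n−q} + γ y_{k+r} y_{k+n−r}, where α,β,γ are positive integers. Then every y_k is an integer. -/

import Mathlib

/-!
The proof is the Laurent phenomenon of Fomin and Zelevinsky: starting from indeterminates
`x₀, …, xₙ₋₁`, every term is a Laurent polynomial in the `xᵢ` with coefficients polynomial over `ℤ`
in the parameters; the integers are obtained by substituting units for the `xᵢ`.

The recurrence at index `k` determines `z (k + n)` by division by `z k`, so one has to show that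
`z k` divides the right-hand side `S`. For `k < n` it is a unit. For `k = n` an identity for the
cube recurrence gives the claim. For `k > n`, the term `z (k + n - m)` is a Laurent polynomial in
the initial values, and substituting the window `z m, …, z (m + n - 1)` for these shows that `z k`
divides `S` times a product of entries of this window. In the window `m = 1` all entries but `z n`
are units, and `z n` is prime because it is linear in a parameter. In the window `m = n + 1` no
entry is divisible by `z n`, because suitable parameters admit an arithmetic progression with
`z n = 0` as a solution. Hence `z k` divides `S`.
-/

/-- The right-hand side of the Gale–Robinson recurrence at index `k`, with
`(α, β, γ) = (c 0, c 1, c 2)` and `n = p + q + r`. -/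
def galeRobinsonSum {S : Type*} [Add S] [Mul S] (p q r : ℕ) (c : Fin 3 → S) (y : ℕ → S)
    (k : ℕ) : S :=
  c 0 * y (k + p) * y (k + (q + r)) + c 1 * y (k + q) * y (k + (p + r))
    + c 2 * y (k + r) * y (k + (p + q))

/-- The Gale–Robinson recurrence at the single index `k`. It is stated index by index because the
proof of the Laurent phenomenon works with sequences satisfying it only up to some index. -/
def GaleRobinsonAt {S : Type*} [Add S] [Mul S] (p q r : ℕ) (c : Fin 3 → S) (y : ℕ → S)
    (k : ℕ) : Prop :=
  y (k + (p + q + r)) * y k = galeRobinsonSum p q r c y k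

section Recurrence

variable {p q r : ℕ}

lemma map_galeRobinsonSum {S T : Type*} [NonAssocSemiring S] [NonAssocSemiring T] (f : S →+* T)
    (c : Fin 3 → S) (y : ℕ → S) (k : ℕ) :
    f (galeRobinsonSum p q r c y k) = galeRobinsonSum p q r (f ∘ c) (f ∘ y) k := by
  simp only [galeRobinsonSum, map_add, map_mul, Function.comp_apply]

lemma galeRobinsonSum_shift {S : Type*} [Add S] [Mul S] (c : Fin 3 → S) (y : ℕ → S) (k m : ℕ) :
    galeRobinsonSum p q r c (fun i => y (i + m)) k = galeRobinsonSum p q r c y (k + m) := by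
  simp only [galeRobinsonSum, add_right_comm k _ m]

lemma galeRobinsonSum_congr {S : Type*} [Add S] [Mul S] (hp : 0 < p) (hq : 0 < q) (hr : 0 < r)
    (c : Fin 3 → S) {y y' : ℕ → S} {k : ℕ} (h : ∀ i < k + (p + q + r), y i = y' i) :
    galeRobinsonSum p q r c y k = galeRobinsonSum p q r c y' k := by
  simp only [galeRobinsonSum]
  rw [h (k + p) (by lia), h (k + q) (by lia), h (k + r) (by lia), h (k + (q + r)) (by lia),
    h (k + (p + r)) (by lia), h (k + (p + q)) (by lia)]

namespace GaleRobinsonAt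

lemma map {S T : Type*} [NonAssocSemiring S] [NonAssocSemiring T] (f : S →+* T) {c : Fin 3 → S}
    {y : ℕ → S} {k : ℕ} (h : GaleRobinsonAt p q r c y k) :
    GaleRobinsonAt p q r (f ∘ c) (f ∘ y) k := by
  have hf := congrArg f h
  rwa [map_mul, map_galeRobinsonSum] at hf

lemma shift {S : Type*} [Add S] [Mul S] {c : Fin 3 → S} {y : ℕ → S} {k m : ℕ}
    (h : GaleRobinsonAt p q r c y (k + m)) :
    GaleRobinsonAt p q r c (fun i => y (i + m)) k := by
  rw [GaleRobinsonAt, galeRobinsonSum_shift, add_right_comm]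
  exact h

theorem pos {S : Type*} [Semiring S] [LinearOrder S] [IsStrictOrderedRing S]
    (hp : 0 < p) (hq : 0 < q) (hr : 0 < r) {c : Fin 3 → S} {y : ℕ → S} {N : ℕ}
    (hc : ∀ j, 0 < c j) (hinit : ∀ i < p + q + r, 0 < y i)
    (hrec : ∀ k < N, GaleRobinsonAt p q r c y k) :
    ∀ i < N + (p + q + r), 0 < y i := by
  intro i
  induction i using Nat.strong_induction_on with
  | _ i ih =>
    intro hi
    obtain hin | hin := lt_or_ge i (p + q + r)
    · exact hinit i hin
    obtain ⟨k, rfl⟩ := Nat.exists_eq_add_of_le' hin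
    have hsum : 0 < galeRobinsonSum p q r c y k := by
      have ih' (s : ℕ) (hs : s < p + q + r) : 0 < y (k + s) := ih _ (by lia) (by lia)
      have term_pos (j : Fin 3) {s t : ℕ} (hs : s < p + q + r) (ht : t < p + q + r) :
          0 < c j * y (k + s) * y (k + t) :=
        mul_pos (mul_pos (hc j) (ih' s hs)) (ih' t ht)
      exact add_pos (add_pos (term_pos 0 (by lia) (by lia)) (term_pos 1 (by lia) (by lia)))
        (term_pos 2 (by lia) (by lia))
    rw [← hrec k (by lia)] at hsum
    exact pos_of_mul_pos_left hsum (ih k (by lia) (by lia)).le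

theorem eq_of_init_eq {S : Type*} [CommRing S] (hp : 0 < p) (hq : 0 < q) (hr : 0 < r)
    {c : Fin 3 → S} {y y' : ℕ → S} {N : ℕ} (hy : ∀ k < N, GaleRobinsonAt p q r c y k)
    (hy' : ∀ k < N, GaleRobinsonAt p q r c y' k) (hreg : ∀ k < N, y' k ∈ nonZeroDivisors S)
    (hinit : ∀ i < p + q + r, y i = y' i) :
    ∀ i < N + (p + q + r), y i = y' i := by
  intro i
  induction i using Nat.strong_induction_on with
  | _ i ih =>
    intro hi
    obtain hin | hin := lt_or_ge i (p + q + r)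
    · exact hinit i hin
    obtain ⟨k, rfl⟩ := Nat.exists_eq_add_of_le' hin
    have hk : k < N := by lia
    rw [← mul_cancel_right_mem_nonZeroDivisors (hreg k hk)]
    calc y (k + (p + q + r)) * y' k
        = y (k + (p + q + r)) * y k := by rw [ih k (by lia) (by lia)]
      _ = galeRobinsonSum p q r c y k := hy k hk
      _ = galeRobinsonSum p q r c y' k :=
        galeRobinsonSum_congr hp hq hr c fun i hi => ih i hi (by lia)
      _ = y' (k + (p + q + r)) * y' k := (hy' k hk).symm

end GaleRobinsonAt

/-- Both sides of the recurrence are quadratic in `t + k`. The hypotheses compare the coefficients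
of `(t + k) ^ 2` and of `1`, and the linear coefficient is `p + q + r` times the leading one. -/
lemma galeRobinsonAt_arithmetic {S : Type*} [CommRing S] {a b : S} (hab : a + b = 1)
    (hpq : a * (p * (q + r)) + b * (q * (p + r)) = 0) (t : S) (k : ℕ) :
    GaleRobinsonAt p q r ![a, b, 0] (fun i => t + i) k := by
  simp only [GaleRobinsonAt, galeRobinsonSum, Matrix.cons_val]
  push_cast
  linear_combination (-(t + k) * (t + k + (p + q + r))) * hab - hpq

lemma exists_arithmetic_coefficients {F : Type*} [Field F] [CharZero F] (hr : 0 < r)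
    (hpq : p ≠ q) :
    ∃ a b : F, a + b = 1 ∧ a * (p * (q + r)) + b * (q * (p + r)) = 0 := by
  have hqp : (q : F) - p ≠ 0 := sub_ne_zero.2 (by exact_mod_cast hpq.symm)
  have hr' : (r : F) ≠ 0 := by exact_mod_cast hr.ne'
  refine ⟨q * (p + r) / ((q - p) * r), -p * (q + r) / ((q - p) * r), ?_, ?_⟩ <;> field_simp <;> ring

end Recurrence

section Divisibility

lemma prime_of_dvd_sub_map {A : Type*} [CommRing A] [IsDomain A] {π : A} (hπ : π ≠ 0)
    (ψ : A →+* A) (hψ : ψ π = 0) (hsub : ∀ s, π ∣ s - ψ s) : Prime π := by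
  have dvd_iff (s : A) : π ∣ s ↔ ψ s = 0 := by
    refine ⟨fun ⟨t, ht⟩ => by rw [ht, map_mul, hψ, zero_mul], fun hs => ?_⟩
    simpa only [hs, sub_zero] using hsub s
  refine ⟨hπ, fun hunit => ?_, fun s t hst => ?_⟩
  · exact not_isUnit_zero (hψ ▸ hunit.map ψ)
  · simpa only [dvd_iff, map_mul, mul_eq_zero] using hst

variable {A : Type*} [CommMonoidWithZero A]

lemma dvd_of_dvd_mul_of_prime [IsCancelMulZero A] {π s t u : A} (hπ : Prime π) (ht : ¬π ∣ t)
    (hπs : u ∣ π * s) (hts : u ∣ t * s) : u ∣ s := by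
  obtain rfl | hu := eq_or_ne u 0
  · simpa [hπ.ne_zero] using hπs
  obtain ⟨v, hv⟩ := hπs
  obtain ⟨w, hw⟩ := hts
  have hvw : t * v = π * w := mul_left_cancel₀ hu <| by
    rw [mul_left_comm, ← hv, mul_left_comm u, ← hw, mul_left_comm]
  obtain ⟨v', rfl⟩ := (hπ.dvd_or_dvd ⟨w, hvw⟩).resolve_left ht
  exact ⟨v', mul_left_cancel₀ hπ.ne_zero (by rw [hv, mul_left_comm])⟩

lemma dvd_of_dvd_mul_of_mem_closure [IsCancelMulZero A] {E : Set A} {d t u : A}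
    (hE : ∀ v ∈ E, IsUnit v ∨ Prime v ∧ ¬v ∣ t) (hd : d ∈ Submonoid.closure E) :
    ∀ {s : A}, u ∣ d * s → u ∣ t * s → u ∣ s := by
  induction hd using Submonoid.closure_induction with
  | mem v hv =>
    intro s hvs hts
    obtain hunit | ⟨hprime, hvt⟩ := hE v hv
    · exact hunit.dvd_mul_left.1 hvs
    · exact dvd_of_dvd_mul_of_prime hprime hvt hvs hts
  | one => intro s hs _; rwa [one_mul] at hs
  | mul d d' _ _ ihd ihd' =>
    intro s hds hts
    rw [mul_assoc] at hds
    exact ihd' (ihd hds (by rw [mul_left_comm]; exact hts.mul_left d')) hts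

lemma not_dvd_of_mem_closure {π d : A} (hπ : Prime π) {E : Set A} (hE : ∀ v ∈ E, ¬π ∣ v)
    (hd : d ∈ Submonoid.closure E) : ¬π ∣ d := by
  induction hd using Submonoid.closure_induction with
  | mem v hv => exact hE v hv
  | one => exact fun h => hπ.not_isUnit (isUnit_of_dvd_one h)
  | mul d d' _ _ ihd ihd' => exact hπ.not_dvd_mul ihd ihd'

end Divisibility

lemma dvd_of_cube_recurrence {A : Type*} [CommRing A] (c : Fin 3 → A) (f : ℕ → ℕ → ℕ → A)
    (h : ∀ i j l, i ≤ 1 → j ≤ 1 → l ≤ 1 → i + j + l ≤ 2 →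
      f (i + 1) (j + 1) (l + 1) * f i j l = c 0 * f (i + 1) j l * f i (j + 1) (l + 1)
        + c 1 * f i (j + 1) l * f (i + 1) j (l + 1)
        + c 2 * f i j (l + 1) * f (i + 1) (j + 1) l) :
    f 1 1 1 ∣ (c 0 * f 2 1 1 * f 1 2 2 + c 1 * f 1 2 1 * f 2 1 2 + c 2 * f 1 1 2 * f 2 2 1)
      * (f 0 1 1 * f 1 0 1 * f 1 1 0) := by
  have h000 := h 0 0 0
  have h100 := h 1 0 0
  have h010 := h 0 1 0
  have h001 := h 0 0 1
  have h011 := h 0 1 1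
  have h101 := h 1 0 1
  have h110 := h 1 1 0
  norm_num at h000 h100 h010 h001 h011 h101 h110
  use f 2 1 1 * f 1 2 1 * f 1 1 2 * f 0 0 0
    + c 0 * c 0 * (f 2 1 1 * f 1 0 1 * f 1 1 0 * f 0 2 2 - f 1 1 2 * f 1 2 1 * f 0 1 1 * f 2 0 0)
    + c 1 * c 1 * (f 1 2 1 * f 0 1 1 * f 1 1 0 * f 2 0 2 - f 2 1 1 * f 1 1 2 * f 1 0 1 * f 0 2 0)
    + c 2 * c 2 * (f 1 1 2 * f 0 1 1 * f 1 0 1 * f 2 2 0 - f 2 1 1 * f 1 2 1 * f 1 1 0 * f 0 0 2)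
  linear_combination c 0 * f 2 1 1 * f 1 0 1 * f 1 1 0 * h011
    + c 1 * f 1 2 1 * f 0 1 1 * f 1 1 0 * h101 + c 2 * f 1 1 2 * f 0 1 1 * f 1 0 1 * h110
    - f 1 1 2 * f 1 2 1 * c 0 * f 0 1 1 * h100 - f 2 1 1 * f 1 1 2 * c 1 * f 1 0 1 * h010
    - f 2 1 1 * f 1 2 1 * c 2 * f 1 1 0 * h001 - f 2 1 1 * f 1 2 1 * f 1 1 2 * h000

section LaurentRing

open MvPolynomial

/-- The monomials in the initial variables: the denominators of `LaurentRing n`. -/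
noncomputable def initialMonomials (n : ℕ) : Submonoid (MvPolynomial (Fin n ⊕ Fin 3) ℤ) :=
  Submonoid.closure (Set.range fun i => X (Sum.inl i))

lemma initialMonomials_le {n : ℕ} {M : Submonoid (MvPolynomial (Fin n ⊕ Fin 3) ℤ)}
    (hM : ∀ i, X (Sum.inl i) ∈ M) : initialMonomials n ≤ M :=
  Submonoid.closure_le.2 (Set.range_subset_iff.2 hM)

lemma isUnit_map_initialMonomials {n : ℕ} {S : Type*} [CommRing S]
    {g : MvPolynomial (Fin n ⊕ Fin 3) ℤ →+* S} (hg : ∀ i, IsUnit (g (X (Sum.inl i))))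
    (d : initialMonomials n) : IsUnit (g d) :=
  initialMonomials_le (M := (IsUnit.submonoid S).comap g) hg d.2

/-- The ring `ℤ[x₀^±¹, …, xₙ₋₁^±¹, c₀, c₁, c₂]` containing the generic Gale–Robinson sequence:
Laurent polynomials in the initial values with coefficients polynomial in the parameters. -/
abbrev LaurentRing (n : ℕ) : Type := Localization (initialMonomials n)

namespace LaurentRing

variable {n : ℕ} {S : Type*} [CommRing S]

/-- The generic initial value `xᵢ`. -/
noncomputable def x (i : Fin n) : LaurentRing n :=
  algebraMap (MvPolynomial (Fin n ⊕ Fin 3) ℤ) _ (X (Sum.inl i))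

/-- The generic parameter `cⱼ`. -/
noncomputable def coeff (j : Fin 3) : LaurentRing n :=
  algebraMap (MvPolynomial (Fin n ⊕ Fin 3) ℤ) _ (X (Sum.inr j))

instance : IsDomain (LaurentRing n) :=
  IsLocalization.isDomain_localization <|
    initialMonomials_le fun _ => mem_nonZeroDivisors_of_ne_zero (X_ne_zero _)

lemma isUnit_x (i : Fin n) : IsUnit (x i) :=
  IsLocalization.map_units _ (⟨_, Submonoid.subset_closure ⟨i, rfl⟩⟩ : initialMonomials n)

/-- The substitution `xᵢ ↦ Y i`, `cⱼ ↦ c j`. -/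
noncomputable def lift (Y : Fin n → Sˣ) (c : Fin 3 → S) : LaurentRing n →+* S :=
  IsLocalization.lift (M := initialMonomials n)
    (g := eval₂Hom (Int.castRingHom S) (Sum.elim (fun i => (Y i : S)) c))
    (isUnit_map_initialMonomials fun i => by simp)

@[simp]
lemma lift_x (Y : Fin n → Sˣ) (c : Fin 3 → S) (i : Fin n) : lift Y c (x i) = Y i := by
  rw [lift, x, IsLocalization.lift_eq, coe_eval₂Hom, eval₂_X, Sum.elim_inl]

@[simp]
lemma lift_coeff (Y : Fin n → Sˣ) (c : Fin 3 → S) (j : Fin 3) : lift Y c (coeff j) = c j := by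
  rw [lift, coeff, IsLocalization.lift_eq, coe_eval₂Hom, eval₂_X, Sum.elim_inr]

lemma lift_comp_coeff (Y : Fin n → Sˣ) (c : Fin 3 → S) : lift Y c ∘ coeff = c :=
  funext (lift_coeff Y c)

lemma ringHom_ext {f g : LaurentRing n →+* S} (hx : ∀ i, f (x i) = g (x i))
    (hcoeff : ∀ j, f (coeff j) = g (coeff j)) : f = g := by
  refine IsLocalization.ringHom_ext (initialMonomials n) (MvPolynomial.ringHom_ext ?_ ?_)
  · intro m
    simp
  · rintro (i | j)
    exacts [hx i, hcoeff j]

lemma algebraMap_mem (T : Subring (LaurentRing n)) (hx : ∀ i, x i ∈ T) (hcoeff : ∀ j, coeff j ∈ T)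
    (f : MvPolynomial (Fin n ⊕ Fin 3) ℤ) : algebraMap _ (LaurentRing n) f ∈ T := by
  induction f using MvPolynomial.induction_on with
  | C m => simp
  | add f g hf hg => rw [map_add]; exact add_mem hf hg
  | mul_X f v hf =>
    rw [map_mul]
    refine mul_mem hf ?_
    obtain i | j := v
    exacts [hx i, hcoeff j]

lemma exists_mul_mem (T : Subring (LaurentRing n)) (hx : ∀ i, x i ∈ T) (hcoeff : ∀ j, coeff j ∈ T)
    (s : LaurentRing n) : ∃ d ∈ Submonoid.closure (Set.range (x (n := n))), s * d ∈ T := by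
  obtain ⟨⟨f, d, hd⟩, hs⟩ := IsLocalization.surj (initialMonomials n) s
  refine ⟨algebraMap _ _ d, ?_, ?_⟩
  · refine initialMonomials_le (M := (Submonoid.closure _).comap (algebraMap _ _)) (fun i => ?_) hd
    exact Submonoid.subset_closure ⟨i, rfl⟩
  · rw [hs]
    exact algebraMap_mem T hx hcoeff f

lemma dvd_map_sub_map {f g : LaurentRing n →+* S} {π : S} (hx : ∀ i, π ∣ f (x i) - g (x i))
    (hcoeff : ∀ j, π ∣ f (coeff j) - g (coeff j)) (s : LaurentRing n) : π ∣ f s - g s := by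
  have hmk (t u : S) :
      Ideal.Quotient.mk (Ideal.span {π}) t = Ideal.Quotient.mk _ u ↔ π ∣ t - u := by
    rw [Ideal.Quotient.mk_eq_mk_iff_sub_mem, Ideal.mem_span_singleton]
  have hfg : (Ideal.Quotient.mk (Ideal.span {π})).comp f = (Ideal.Quotient.mk _).comp g :=
    ringHom_ext (fun i => (hmk _ _).2 (hx i)) fun j => (hmk _ _).2 (hcoeff j)
  exact (hmk _ _).1 (RingHom.congr_fun hfg s)

/-- The element is linear in `c₀` with a unit as leading coefficient, so it generates the kernel of
the substitution of its root for `c₀`. -/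
lemma prime_coeff_mul_add (i i' j j' l l' : Fin n) :
    Prime (coeff 0 * x i * x i' + coeff 1 * x j * x j' + coeff 2 * x l * x l') := by
  set π : LaurentRing n := coeff 0 * x i * x i' + coeff 1 * x j * x j' + coeff 2 * x l * x l'
    with hπ
  let u : (LaurentRing n)ˣ := (isUnit_x i).unit * (isUnit_x i').unit
  let root : LaurentRing n :=
    -(coeff 1 * x j * x j' + coeff 2 * x l * x l') * (↑u⁻¹ : LaurentRing n)
  have hu : (u : LaurentRing n) = x i * x i' := by simp [u]
  have hroot : root * (x i * x i') = -(coeff 1 * x j * x j' + coeff 2 * x l * x l') := by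
    rw [← hu, Units.inv_mul_cancel_right]
  have hπ_eq : π = (u : LaurentRing n) * (coeff 0 - root) := by
    rw [hu]
    linear_combination hπ + hroot
  let ψ : LaurentRing n →+* LaurentRing n :=
    lift (fun i => (isUnit_x i).unit) ![root, coeff 1, coeff 2]
  refine prime_of_dvd_sub_map (fun hzero => ?_) ψ ?_ fun s => ?_
  · have := congrArg (lift (S := ℤ) 1 1) hzero
    simp [π] at this
  · simp only [π, ψ, map_add, map_mul, lift_x, lift_coeff, Matrix.cons_val, IsUnit.unit_spec]
    linear_combination hroot
  · refine dvd_map_sub_map (f := RingHom.id _) (fun i => by simp [ψ]) (fun j => ?_) s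
    fin_cases j
    · exact ⟨(↑u⁻¹ : LaurentRing n), by simp [ψ, hπ_eq, mul_right_comm]⟩
    · simp [ψ]
    · simp [ψ]

end LaurentRing

end LaurentRing

namespace LaurentRing

variable {p q r : ℕ} {z : ℕ → LaurentRing (p + q + r)}

lemma isUnit_of_lt (hinit : ∀ i : Fin (p + q + r), z i = x i) {i : ℕ} (hi : i < p + q + r) :
    IsUnit (z i) := by
  rw [hinit ⟨i, hi⟩]
  exact isUnit_x _

lemma ne_zero_of_galeRobinsonAt (hp : 0 < p) (hq : 0 < q) (hr : 0 < r)
    (hinit : ∀ i : Fin (p + q + r), z i = x i) {N : ℕ}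
    (hrec : ∀ k < N, GaleRobinsonAt p q r coeff z k) {i : ℕ} (hi : i < N + (p + q + r)) :
    z i ≠ 0 := by
  let atOne : LaurentRing (p + q + r) →+* ℤ := lift 1 1
  have hpos : 0 < atOne (z i) :=
    GaleRobinsonAt.pos hp hq hr (fun j => by simp [atOne])
      (fun i hi => by simp [atOne, hinit ⟨i, hi⟩]) (fun k hk => (hrec k hk).map atOne) i hi
  intro hzero
  simp [hzero] at hpos

lemma map_eq_of_galeRobinsonAt (hp : 0 < p) (hq : 0 < q) (hr : 0 < r)
    (hinit : ∀ i : Fin (p + q + r), z i = x i) {N : ℕ}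
    (hrec : ∀ k < N, GaleRobinsonAt p q r coeff z k) {S : Type*} [CommRing S]
    (φ : LaurentRing (p + q + r) →+* S) {Y : ℕ → S} (hφ : ∀ i : Fin (p + q + r), φ (x i) = Y i)
    (hY : ∀ k < N, GaleRobinsonAt p q r (φ ∘ coeff) Y k)
    (hreg : ∀ k < N, Y k ∈ nonZeroDivisors S) {i : ℕ} (hi : i < N + (p + q + r)) :
    φ (z i) = Y i :=
  GaleRobinsonAt.eq_of_init_eq hp hq hr (fun k hk => (hrec k hk).map φ) hY hreg
    (fun i hi => by rw [Function.comp_apply, hinit ⟨i, hi⟩, hφ]) i hi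

lemma dvd_galeRobinsonSum_self (hp : 0 < p) (hq : 0 < q) (hr : 0 < r)
    (hinit : ∀ i : Fin (p + q + r), z i = x i)
    (hrec : ∀ k < p + q + r, GaleRobinsonAt p q r coeff z k) :
    z (p + q + r) ∣ galeRobinsonSum p q r coeff z (p + q + r) := by
  have hunit : IsUnit (z (q + r) * z (p + r) * z (p + q)) :=
    ((isUnit_of_lt hinit (by lia)).mul (isUnit_of_lt hinit (by lia))).mul
      (isUnit_of_lt hinit (by lia))
  rw [← hunit.dvd_mul_right]
  have hcube := dvd_of_cube_recurrence coeff (fun i j l => z (i * p + j * q + l * r)) ?_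
  · ring_nf at hcube
    simp only [galeRobinsonSum]
    ring_nf
    exact hcube
  · intro i j l hi hj hl hsum
    have hlt : i * p + j * q + l * r < p + q + r := by
      interval_cases i <;> interval_cases j <;> interval_cases l <;> lia
    have h := hrec _ hlt
    simp only [GaleRobinsonAt, galeRobinsonSum] at h
    ring_nf at h ⊢
    exact h

lemma exists_ringHom_shift (hp : 0 < p) (hq : 0 < q) (hr : 0 < r)
    (hinit : ∀ i : Fin (p + q + r), z i = x i) {k m : ℕ}
    (hrec : ∀ j < k + m, GaleRobinsonAt p q r coeff z j) {K : Type*} [Field K]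
    (e : LaurentRing (p + q + r) →+* K) (he : Function.Injective e) :
    ∃ φ : LaurentRing (p + q + r) →+* K,
      φ ∘ coeff = e ∘ coeff ∧ ∀ i < k + (p + q + r), φ (z i) = e (z (i + m)) := by
  have hne {i : ℕ} (hi : i < k + (p + q + r)) : e (z (i + m)) ≠ 0 :=
    (map_ne_zero_iff e he).2 (ne_zero_of_galeRobinsonAt hp hq hr hinit hrec (by lia))
  let φ := lift (fun i : Fin (p + q + r) => Units.mk0 (e (z (i + m))) (hne (by lia))) (e ∘ coeff)
  have hφ_coeff : φ ∘ coeff = e ∘ coeff := lift_comp_coeff _ _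
  refine ⟨φ, hφ_coeff, fun i hi => ?_⟩
  exact map_eq_of_galeRobinsonAt hp hq hr hinit (fun j hj => hrec j (by lia)) φ
    (Y := fun i => e (z (i + m))) (fun i => by simp [φ])
    (fun j hj => hφ_coeff ▸ ((hrec (j + m) (by lia)).map e).shift)
    (fun j hj => mem_nonZeroDivisors_of_ne_zero (hne (by lia))) hi

lemma exists_dvd_mul_galeRobinsonSum (hp : 0 < p) (hq : 0 < q) (hr : 0 < r)
    (hinit : ∀ i : Fin (p + q + r), z i = x i) {k m : ℕ} (hm : 0 < m)
    (hrec : ∀ j < k + m, GaleRobinsonAt p q r coeff z j) :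
    ∃ d ∈ Submonoid.closure (Set.range fun i : Fin (p + q + r) => z (i + m)),
      z (k + m) ∣ d * galeRobinsonSum p q r coeff z (k + m) := by
  let e := algebraMap (LaurentRing (p + q + r)) (FractionRing (LaurentRing (p + q + r)))
  have he : Function.Injective e := IsFractionRing.injective _ _
  obtain ⟨φ, hφ_coeff, hφ⟩ := exists_ringHom_shift hp hq hr hinit hrec e he
  have hφ_x (i : Fin (p + q + r)) : φ (x i) = e (z (i + m)) := by
    rw [← hinit, hφ i (by lia)]
  have hquot : φ (z (k + (p + q + r))) * e (z (k + m))
      = e (galeRobinsonSum p q r coeff z (k + m)) := by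
    calc φ (z (k + (p + q + r))) * e (z (k + m))
        = φ (z (k + (p + q + r))) * φ (z k) := by rw [hφ k (by lia)]
      _ = galeRobinsonSum p q r (φ ∘ coeff) (φ ∘ z) k := (hrec k (by lia)).map φ
      _ = galeRobinsonSum p q r (e ∘ coeff) (fun i => (e ∘ z) (i + m)) k := by
        rw [hφ_coeff]
        exact galeRobinsonSum_congr hp hq hr _ hφ
      _ = e (galeRobinsonSum p q r coeff z (k + m)) := by
        rw [galeRobinsonSum_shift, map_galeRobinsonSum]
  obtain ⟨d, hd, t, ht⟩ := exists_mul_mem (e.range.comap φ) (fun i => ⟨z (i + m), (hφ_x i).symm⟩)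
    (fun j => ⟨coeff j, (congrFun hφ_coeff j).symm⟩) (z (k + (p + q + r)))
  obtain ⟨d', hd', hdd'⟩ : φ d ∈ (Submonoid.closure
      (Set.range fun i : Fin (p + q + r) => z (i + m))).map e := by
    have hφ_range : e ∘ (fun i : Fin (p + q + r) => z (i + m)) = φ ∘ x :=
      funext fun i => (hφ_x i).symm
    have hφd := Submonoid.mem_map_of_mem φ hd
    rw [MonoidHom.map_mclosure, ← Set.range_comp] at hφd ⊢
    exact hφ_range ▸ hφd
  refine ⟨d', hd', t, he ?_⟩
  rw [map_mul, map_mul, ht, map_mul, ← hquot, hdd']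
  ring

lemma prime_of_galeRobinsonAt_zero (hp : 0 < p) (hq : 0 < q) (hr : 0 < r)
    (hinit : ∀ i : Fin (p + q + r), z i = x i) (hrec : GaleRobinsonAt p q r coeff z 0) :
    Prime (z (p + q + r)) := by
  obtain ⟨u, hu⟩ : IsUnit (z 0) := isUnit_of_lt hinit (by lia)
  have hassoc : Associated (z (p + q + r)) (galeRobinsonSum p q r coeff z 0) :=
    ⟨u, by rw [hu, ← hrec, zero_add]⟩
  rw [hassoc.prime_iff]
  simp only [galeRobinsonSum, zero_add]
  rw [hinit ⟨p, by lia⟩, hinit ⟨q, by lia⟩, hinit ⟨r, by lia⟩, hinit ⟨q + r, by lia⟩,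
    hinit ⟨p + r, by lia⟩, hinit ⟨p + q, by lia⟩]
  exact prime_coeff_mul_add _ _ _ _ _ _

/-- Substitute the arithmetic progression `i - n`, which vanishes at `n` only. It is perturbed to
`i - n + ε` in `ℚ⟦ε⟧` because the recurrence at index `n` divides by its `n`-th term. -/
lemma not_dvd_of_galeRobinsonAt (hp : 0 < p) (hq : 0 < q) (hr : 0 < r) (hpq : p ≠ q)
    (hinit : ∀ i : Fin (p + q + r), z i = x i)
    (hrec : ∀ k ≤ p + q + r, GaleRobinsonAt p q r coeff z k) {i : ℕ} (hi : p + q + r < i)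
    (hi' : i ≤ 2 * (p + q + r)) : ¬z (p + q + r) ∣ z i := by
  obtain ⟨a, b, hab, hab'⟩ := exists_arithmetic_coefficients (F := ℚ) hr hpq
  let Y (i : ℕ) : PowerSeries ℚ :=
    PowerSeries.X - ((p + q + r : ℕ) : PowerSeries ℚ) + (i : PowerSeries ℚ)
  have hY_coeff (i : ℕ) : PowerSeries.constantCoeff (Y i) = (i : ℚ) - (p + q + r : ℕ) := by
    simp only [Y, map_add, map_sub, map_natCast, PowerSeries.constantCoeff_X]
    ring
  have hY_unit {i : ℕ} (hi : i ≠ p + q + r) : IsUnit (Y i) := by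
    rw [PowerSeries.isUnit_iff_constantCoeff, hY_coeff, isUnit_iff_ne_zero, sub_ne_zero]
    exact_mod_cast hi
  have hY_ne (i : ℕ) : Y i ≠ 0 := by
    obtain rfl | hi := eq_or_ne i (p + q + r)
    · simp [Y, PowerSeries.X_ne_zero]
    · exact (hY_unit hi).ne_zero
  let φ := lift (fun i : Fin (p + q + r) => (hY_unit i.2.ne).unit)
    ![PowerSeries.C a, PowerSeries.C b, 0]
  have hY_rec (k : ℕ) : GaleRobinsonAt p q r (φ ∘ coeff) Y k := by
    rw [lift_comp_coeff]
    refine galeRobinsonAt_arithmetic ?_ ?_ _ k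
    · rw [← map_add, hab, map_one]
    · simpa using congrArg (PowerSeries.C (R := ℚ)) hab'
  have hφ {i : ℕ} (hi : i ≤ 2 * (p + q + r)) : φ (z i) = Y i :=
    map_eq_of_galeRobinsonAt hp hq hr hinit (N := p + q + r + 1) (fun k hk => hrec k (by lia)) φ
      (fun i => by simp [φ]) (fun k _ => hY_rec k)
      (fun k _ => mem_nonZeroDivisors_of_ne_zero (hY_ne k)) (by lia)
  intro hdvd
  have h := map_dvd (PowerSeries.constantCoeff.comp φ) hdvd
  rw [RingHom.comp_apply, RingHom.comp_apply, hφ (by lia), hφ hi', hY_coeff, hY_coeff, sub_self,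
    zero_dvd_iff, sub_eq_zero] at h
  exact hi.ne' (by exact_mod_cast h)

theorem dvd_galeRobinsonSum (hp : 0 < p) (hq : 0 < q) (hr : 0 < r) (hpq : p ≠ q)
    (hinit : ∀ i : Fin (p + q + r), z i = x i) {k : ℕ}
    (hrec : ∀ j < k, GaleRobinsonAt p q r coeff z j) :
    z k ∣ galeRobinsonSum p q r coeff z k := by
  obtain hk | rfl | hk := lt_trichotomy k (p + q + r)
  · exact (isUnit_of_lt hinit hk).dvd
  · exact dvd_galeRobinsonSum_self hp hq hr hinit hrec
  have hprime : Prime (z (p + q + r)) :=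
    prime_of_galeRobinsonAt_zero hp hq hr hinit (hrec 0 (by lia))
  have window (m : ℕ) (hm : 0 < m) (hmk : m ≤ k) :
      ∃ d ∈ Submonoid.closure (Set.range fun i : Fin (p + q + r) => z (i + m)),
        z k ∣ d * galeRobinsonSum p q r coeff z k := by
    obtain ⟨k, rfl⟩ := Nat.exists_eq_add_of_le' hmk
    exact exists_dvd_mul_galeRobinsonSum hp hq hr hinit hm hrec
  obtain ⟨d, hd, hd_dvd⟩ := window 1 one_pos (by lia)
  obtain ⟨t, ht, ht_dvd⟩ := window (p + q + r + 1) (by lia) hk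
  have hprime_t : ¬z (p + q + r) ∣ t := by
    refine not_dvd_of_mem_closure hprime ?_ ht
    rintro _ ⟨i, rfl⟩
    exact not_dvd_of_galeRobinsonAt hp hq hr hpq hinit (fun j hj => hrec j (by lia)) (by lia)
      (by lia)
  refine dvd_of_dvd_mul_of_mem_closure ?_ hd hd_dvd ht_dvd
  rintro _ ⟨i, rfl⟩
  obtain hi | hi := (Nat.succ_le_of_lt i.2).lt_or_eq
  · exact Or.inl (isUnit_of_lt hinit hi)
  · refine Or.inr ?_
    dsimp only
    rw [show (i : ℕ) + 1 = p + q + r from hi]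
    exact ⟨hprime, hprime_t⟩

end LaurentRing

section LaurentPhenomenon

open LaurentRing

variable {p q r : ℕ}

/-- The Gale–Robinson sequence with generic initial values and parameters. Past the initial values
each term is a solution `w` of the recurrence, and a junk value if there is none, so that no
field of fractions is needed. -/
noncomputable def genericGaleRobinson (hp : 0 < p) (hq : 0 < q) (hr : 0 < r) (k : ℕ) :
    LaurentRing (p + q + r) :=
  if h : k < p + q + r then x ⟨k, h⟩
  else Classical.epsilon fun w => w * genericGaleRobinson hp hq hr (k - (p + q + r)) =
    coeff 0 * genericGaleRobinson hp hq hr (k - (p + q + r) + p)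
        * genericGaleRobinson hp hq hr (k - (p + q + r) + (q + r))
      + coeff 1 * genericGaleRobinson hp hq hr (k - (p + q + r) + q)
        * genericGaleRobinson hp hq hr (k - (p + q + r) + (p + r))
      + coeff 2 * genericGaleRobinson hp hq hr (k - (p + q + r) + r)
        * genericGaleRobinson hp hq hr (k - (p + q + r) + (p + q))
termination_by k
decreasing_by all_goals lia

lemma genericGaleRobinson_init (hp : 0 < p) (hq : 0 < q) (hr : 0 < r) (i : Fin (p + q + r)) :
    genericGaleRobinson hp hq hr i = x i := by
  rw [genericGaleRobinson, dif_pos i.2]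

theorem laurent_phenomenon (hp : 0 < p) (hq : 0 < q) (hr : 0 < r) (hpq : p ≠ q) (k : ℕ) :
    GaleRobinsonAt p q r coeff (genericGaleRobinson hp hq hr) k := by
  induction k using Nat.strong_induction_on with
  | _ k ih =>
    obtain ⟨w, hw⟩ := dvd_galeRobinsonSum hp hq hr hpq (genericGaleRobinson_init hp hq hr) ih
    rw [mul_comm] at hw
    rw [GaleRobinsonAt, genericGaleRobinson, dif_neg (by lia), Nat.add_sub_cancel]
    exact Classical.epsilon_spec (p := fun w => w * genericGaleRobinson hp hq hr k =
      galeRobinsonSum p q r coeff (genericGaleRobinson hp hq hr) k) ⟨w, hw.symm⟩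

end LaurentPhenomenon

theorem gale_robinson_integrality_general {R S : Type*} [CommRing R] [CommRing S] (f : R →+* S)
    {p q r : ℕ} (hp : 0 < p) (hq : 0 < q) (hr : 0 < r) (hpq : p ≠ q) (c : Fin 3 → R) (y : ℕ → S)
    (hinit : ∀ i < p + q + r, ∃ u : Rˣ, f u = y i) (hreg : ∀ k, y k ∈ nonZeroDivisors S)
    (hrec : ∀ k, GaleRobinsonAt p q r (f ∘ c) y k) (k : ℕ) :
    y k ∈ f.range := by
  choose u hu using fun i : Fin (p + q + r) => hinit i i.2
  let φ := LaurentRing.lift u c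
  refine ⟨φ (genericGaleRobinson hp hq hr k), ?_⟩
  refine LaurentRing.map_eq_of_galeRobinsonAt hp hq hr (genericGaleRobinson_init hp hq hr)
    (fun j _ => laurent_phenomenon hp hq hr hpq j) (f.comp φ) (fun i => by simp [φ, hu])
    (fun j _ => ?_) (fun j _ => hreg j) (N := k + 1) (by lia)
  rw [RingHom.coe_comp, Function.comp_assoc, LaurentRing.lift_comp_coeff]
  exact hrec j

/-- The Gale–Robinson integrality conjecture: with all-ones initial values
and positive integer parameters α, β, γ, every term of the Gale–Robinson
sequence is an integer. -/
theorem gale_robinson_integrality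
    (p q r : ℕ) (hp : 0 < p) (hq : 0 < q) (hr : 0 < r)
    (hpq : p ≠ q) (hpr : p ≠ r) (hqr : q ≠ r)
    (n : ℕ) (hn : n = p + q + r)
    (α β γ : ℤ) (hα : 0 < α) (hβ : 0 < β) (hγ : 0 < γ)
    (y : ℕ → ℚ)
    (hinit : ∀ i : ℕ, i < n → y i = 1)
    (hrec : ∀ k : ℕ,
      y (k + n) * y k = α * y (k + p) * y (k + (n - p)) + β * y (k + q) * y (k + (n - q))
        + γ * y (k + r) * y (k + (n - r))) :
    ∀ k : ℕ, ∃ z : ℤ, y k = z := by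
  subst hn
  have hat (k : ℕ) : GaleRobinsonAt p q r (Int.castRingHom ℚ ∘ ![α, β, γ]) y k := by
    have hk := hrec k
    rwa [show p + q + r - p = q + r by lia, show p + q + r - q = p + r by lia,
      Nat.add_sub_cancel] at hk
  have hpos (k : ℕ) : 0 < y k :=
    GaleRobinsonAt.pos (N := k) hp hq hr (by simp [Fin.forall_fin_succ, hα, hβ, hγ])
      (fun i hi => by simp [hinit i hi]) (fun j _ => hat j) k (by lia)
  intro k
  obtain ⟨m, hm⟩ := gale_robinson_integrality_general (Int.castRingHom ℚ) hp hq hr hpq ![α, β, γ] y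
    (fun i hi => ⟨1, by simp [hinit i hi]⟩)
    (fun k => mem_nonZeroDivisors_of_ne_zero (hpos k).ne') hat k
  exact ⟨m, hm.symm⟩
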